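/- The average of a Hamiltonian vector field is the Hamiltonian vector field of the average: let H : ℝⁿ×ℝⁿ → ℝ be smooth with complete canonical Hamiltonian vector field X_H whose flow is periodic with smooth frequency function ω > 0, and let ψ be the 2π-periodic flow of the generator Υ = (1/ω) X_H. For a smooth g : ℝⁿ×ℝⁿ → ℝ define the averaged vector field ⟨X_g⟩(x) = (1/(2π)) ∫₀^{2π} Dψ_{−t}(ψ_t x)[X_g(ψ_t x)] dt (the average of the pullbacks of X_g by ψ_t) and the averaged function ⟨g⟩(x) = (1/(2π)) ∫₀^{2π} g(ψ t x) dt. Then ⟨X_g⟩ = X_{⟨g⟩}. In particular, if g is S¹-invariant then X_g is S¹-invariant. -/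

import Mathlib

open Real

/-- The canonical Hamiltonian vector field `X_H = (∂H/∂p, −∂H/∂q)` on ℝⁿ × ℝⁿ. -/
noncomputable def hamVF {n : ℕ} (H : ((Fin n → ℝ) × (Fin n → ℝ)) → ℝ)
    (x : (Fin n → ℝ) × (Fin n → ℝ)) : (Fin n → ℝ) × (Fin n → ℝ) :=
  (fun i => fderiv ℝ H x (0, Pi.single i 1),
   fun i => - fderiv ℝ H x (Pi.single i 1, 0))

section SmoothFlow

open Set Metric Topology Filter MeasureTheory
open scoped NNReal

variable {E : Type*} [NormedAddCommGroup E] [NormedSpace ℝ E]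

theorem ContDiff.exists_lipschitzOnWith_closedBall {F : Type*} [NormedAddCommGroup F]
    [NormedSpace ℝ F] [FiniteDimensional ℝ E] {f : E → F} (hf : ContDiff ℝ 1 f) (R : ℝ) :
    ∃ K : ℝ≥0, LipschitzOnWith K f (closedBall 0 R) := by
  have : ProperSpace E := FiniteDimensional.proper ℝ E
  exact hf.contDiffOn.exists_lipschitzOnWith one_ne_zero (convex_closedBall 0 R)
    (isCompact_closedBall 0 R)

/-- Two solutions on a compact interval of an autonomous `C¹` differential equation coincide if
they agree at an interior time. -/
theorem ContDiff.eqOn_Icc_of_hasDerivAt [FiniteDimensional ℝ E] {X : E → E}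
    (hX : ContDiff ℝ 1 X) {f g : ℝ → E} {a b t₀ : ℝ} (ht₀ : t₀ ∈ Ioo a b)
    (hf : ContinuousOn f (Icc a b)) (hf' : ∀ t ∈ Ioo a b, HasDerivAt f (X (f t)) t)
    (hg : ContinuousOn g (Icc a b)) (hg' : ∀ t ∈ Ioo a b, HasDerivAt g (X (g t)) t)
    (h : f t₀ = g t₀) : EqOn f g (Icc a b) := by
  obtain ⟨R, hR⟩ := ((isCompact_Icc.image_of_continuousOn hf).union
    (isCompact_Icc.image_of_continuousOn hg)).isBounded.subset_closedBall 0
  obtain ⟨K, hK⟩ := hX.exists_lipschitzOnWith_closedBall R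
  exact ODE_solution_unique_of_mem_Icc (v := fun _ => X) (s := fun _ => closedBall 0 R)
    (fun _ _ => hK) ht₀ hf hf'
    (fun t ht => hR (Or.inl (mem_image_of_mem f (Ioo_subset_Icc_self ht)))) hg hg'
    (fun t ht => hR (Or.inr (mem_image_of_mem g (Ioo_subset_Icc_self ht)))) h

theorem norm_sub_sub_fderiv_le_of_lipschitzOnWith {F : Type*} [NormedAddCommGroup F]
    [NormedSpace ℝ F] {f : E → F} (hf : Differentiable ℝ f) {s : Set E} (hs : Convex ℝ s)
    {K : ℝ≥0} (hK : LipschitzOnWith K (fderiv ℝ f) s) {a b : E} (ha : a ∈ s) (hb : b ∈ s) :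
    ‖f b - f a - fderiv ℝ f a (b - a)‖ ≤ K * ‖b - a‖ ^ 2 := by
  have := (convex_segment a b).norm_image_sub_le_of_norm_fderiv_le' (𝕜 := ℝ)
    (f := f) (φ := fderiv ℝ f a) (C := K * ‖b - a‖) (fun z _ => hf z) (fun z hz => ?_)
    (left_mem_segment ℝ a b) (right_mem_segment ℝ a b)
  · linarith
  · refine (hK.norm_sub_le (hs.segment_subset ha hb hz) ha).trans ?_
    gcongr
    obtain ⟨c, hc, rfl⟩ := (segment_eq_image' ℝ a b ▸ hz :)
    rw [add_sub_cancel_left, norm_smul, Real.norm_of_nonneg hc.1]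
    exact mul_le_of_le_one_left (norm_nonneg _) hc.2

theorem gronwallBound_zero_left (K ε x : ℝ) :
    gronwallBound 0 K ε x = ε * gronwallBound 0 K 1 x := by
  by_cases hK : K = 0
  · simp [hK, gronwallBound_K0]
  · simp only [gronwallBound_of_K_ne_0 hK]
    ring

/-- If `φ` is a family of integral curves of `X`, Lipschitz in the initial condition, and `M`
solves the variational equation along the solution through `y`, then `M t` is the derivative of
`φ t` at `y`. -/
theorem hasFDerivAt_of_variational_equation {X : E → E} (hX : Differentiable ℝ X)
    {φ : ℝ → E → E} {M : ℝ → E →L[ℝ] E} {s u : Set E} {ε : ℝ} {y : E} {K L C : ℝ≥0}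
    (hs : Convex ℝ s) (hK : LipschitzOnWith K (fderiv ℝ X) s)
    (hC : ∀ z ∈ s, ‖fderiv ℝ X z‖ ≤ C) (hu : u ∈ 𝓝 y)
    (hφs : ∀ t ∈ Ioo (-ε) ε, ∀ z ∈ u, φ t z ∈ s)
    (hφ0 : ∀ z, φ 0 z = z)
    (hφ : ∀ t ∈ Ioo (-ε) ε, ∀ z ∈ u, HasDerivAt (φ · z) (X (φ t z)) t)
    (hL : ∀ t ∈ Ioo (-ε) ε, LipschitzOnWith L (φ t) u)
    (hM0 : M 0 = ContinuousLinearMap.id ℝ E)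
    (hM : ∀ t ∈ Ioo (-ε) ε, HasDerivAt M ((fderiv ℝ X (φ t y)).comp (M t)) t)
    {t : ℝ} (ht : t ∈ Ioo (-ε) ε) : HasFDerivAt (φ t) (M t) y := by
  have hy : y ∈ u := mem_of_mem_nhds hu
  have hmem : ∀ σ ∈ Icc (0 : ℝ) 1, σ * t ∈ Ioo (-ε) ε := fun σ hσ => by
    have h1 : |σ * t| ≤ |t| := by
      rw [abs_mul, abs_of_nonneg hσ.1]
      exact mul_le_of_le_one_left (abs_nonneg _) hσ.2
    exact abs_lt.1 (h1.trans_lt (abs_lt.2 ht))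
  have key : ∀ z ∈ u, ‖φ t z - φ t y - M t (z - y)‖ ≤
      (|t| * (K * L ^ 2) * gronwallBound 0 (|t| * C) 1 1) * ‖z - y‖ ^ 2 := by
    intro z hz
    set e : ℝ → E := fun τ => φ τ z - φ τ y - M τ (z - y) with he
    set e' : ℝ → E := fun τ => X (φ τ z) - X (φ τ y) - fderiv ℝ X (φ τ y) (M τ (z - y)) with he'
    have hd : ∀ σ ∈ Icc (0 : ℝ) 1, HasDerivAt (fun σ => e (σ * t)) (t • e' (σ * t)) σ := by
      intro σ hσ
      have hm := hmem σ hσ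
      have h1 : HasDerivAt e (e' (σ * t)) (σ * t) :=
        ((hφ _ hm z hz).sub (hφ _ hm y hy)).sub
          (by simpa using (hM _ hm).clm_apply (hasDerivAt_const _ (z - y)))
      have h2 : HasDerivAt (fun σ : ℝ => σ * t) t σ := by
        simpa using (hasDerivAt_id σ).mul_const t
      exact h1.scomp σ h2
    have hb : ∀ σ ∈ Ico (0 : ℝ) 1, ‖t • e' (σ * t)‖ ≤
        (|t| * C) * ‖e (σ * t)‖ + |t| * (K * L ^ 2) * ‖z - y‖ ^ 2 := by
      intro σ hσ
      have hm := hmem σ (Ico_subset_Icc_self hσ)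
      have hsplit : e' (σ * t) = (X (φ (σ * t) z) - X (φ (σ * t) y)
          - fderiv ℝ X (φ (σ * t) y) (φ (σ * t) z - φ (σ * t) y))
          + fderiv ℝ X (φ (σ * t) y) (e (σ * t)) := by
        simp only [he, he', map_sub]
        abel
      have h1 := norm_sub_sub_fderiv_le_of_lipschitzOnWith hX hs hK (hφs _ hm y hy)
        (hφs _ hm z hz)
      have h2 := (fderiv ℝ X (φ (σ * t) y)).le_of_opNorm_le (hC _ (hφs _ hm y hy)) (e (σ * t))
      have h3 := (hL _ hm).norm_sub_le hz hy
      have h4 : ‖φ (σ * t) z - φ (σ * t) y‖ ^ 2 ≤ (L * ‖z - y‖) ^ 2 := by gcongr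
      have h5 : ‖e' (σ * t)‖ ≤ K * (L * ‖z - y‖) ^ 2 + C * ‖e (σ * t)‖ := by
        rw [hsplit]
        refine (norm_add_le _ _).trans (add_le_add (h1.trans ?_) h2)
        gcongr
      rw [norm_smul, Real.norm_eq_abs]
      calc |t| * ‖e' (σ * t)‖ ≤ |t| * (K * (L * ‖z - y‖) ^ 2 + C * ‖e (σ * t)‖) := by gcongr
        _ = _ := by ring
    have := norm_le_gronwallBound_of_norm_deriv_right_le (δ := 0)
      (fun σ hσ => (hd σ hσ).continuousAt.continuousWithinAt)
      (fun σ hσ => (hd σ (Ico_subset_Icc_self hσ)).hasDerivWithinAt)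
      (by simp [he, hφ0, hM0]) hb 1 (by simp)
    rw [gronwallBound_zero_left] at this
    simp only [one_mul, sub_zero] at this
    exact this.trans_eq (by ring)
  rw [hasFDerivAt_iff_isLittleO]
  have hO : (fun z => φ t z - φ t y - M t (z - y)) =O[𝓝 y] fun z => ‖z - y‖ ^ 2 := by
    refine Asymptotics.IsBigO.of_bound
      (|t| * (K * L ^ 2) * gronwallBound 0 (|t| * C) 1 1) (Filter.eventually_of_mem hu fun z hz => ?_)
    rw [norm_pow, norm_norm]
    exact key z hz
  exact hO.trans_isLittleO (Asymptotics.isLittleO_pow_sub_sub y one_lt_two)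

/-- Near time zero the flow of a `C²` vector field has a jointly continuous space derivative, which
solves the variational equation. -/
theorem exists_local_fderiv_flow [FiniteDimensional ℝ E] {X : E → E} (hX : ContDiff ℝ 2 X)
    {ψ : ℝ → E → E} (hψ0 : ∀ x, ψ 0 x = x)
    (hψ : ∀ t x, HasDerivAt (fun τ => ψ τ x) (X (ψ t x)) t) (x₀ : E) :
    ∃ ε > 0, ∃ r > 0, ∃ M : ℝ → E → E →L[ℝ] E,
      (∀ t ∈ Ioo (-ε) ε, ∀ y ∈ ball x₀ r, HasFDerivAt (ψ t) (M t y) y) ∧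
      HasDerivAt (fun t => M t x₀) (fderiv ℝ X x₀) 0 ∧
      ContinuousOn ↿M (Ioo (-ε) ε ×ˢ ball x₀ r) ∧
      ContinuousOn ↿ψ (Ioo (-ε) ε ×ˢ ball x₀ r) := by
  have : ProperSpace E := FiniteDimensional.proper ℝ E
  have hX1 : ContDiff ℝ 1 X := hX.of_le one_le_two
  have hDX : ContDiff ℝ 1 (fderiv ℝ X) := hX.fderiv_right (by norm_num [one_add_one_eq_two])
  let Y : E × (E →L[ℝ] E) → E × (E →L[ℝ] E) := fun p => (X p.1, (fderiv ℝ X p.1).comp p.2)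
  have hY : ContDiff ℝ 1 Y :=
    (hX1.comp contDiff_fst).prodMk ((hDX.comp contDiff_fst).clm_comp contDiff_snd)
  obtain ⟨ε, hε, a, r, L₀, K₀, hr, hPL⟩ :=
    IsPicardLindelof.of_contDiffAt_one (hY.contDiffAt (x := (x₀, ContinuousLinearMap.id ℝ E)))
  obtain ⟨α, hα, L, hL⟩ :=
    (hPL 0).exists_forall_mem_closedBall_eq_hasDerivWithinAt_lipschitzOnWith
  simp only [zero_sub, zero_add] at hα hL
  have hmem : ∀ y ∈ closedBall x₀ r, (y, ContinuousLinearMap.id ℝ E) ∈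
      closedBall (x₀, ContinuousLinearMap.id ℝ E) r := fun y hy => by
    simpa [Prod.dist_eq] using hy
  have hderiv : ∀ y ∈ closedBall x₀ r, ∀ t ∈ Ioo (-ε) ε,
      HasDerivAt (α (y, ContinuousLinearMap.id ℝ E))
        (Y (α (y, ContinuousLinearMap.id ℝ E) t)) t := fun y hy t ht =>
    ((hα _ (hmem y hy)).2 t (Ioo_subset_Icc_self ht)).hasDerivAt (Icc_mem_nhds ht.1 ht.2)
  have hαc : ∀ y ∈ closedBall x₀ r,
      ContinuousOn (α (y, ContinuousLinearMap.id ℝ E)) (Icc (-ε) ε) := fun y hy =>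
    HasDerivWithinAt.continuousOn (hα _ (hmem y hy)).2
  have hαψ : ∀ y ∈ closedBall x₀ r, ∀ t ∈ Icc (-ε) ε,
      (α (y, ContinuousLinearMap.id ℝ E) t).1 = ψ t y := fun y hy =>
    hX1.eqOn_Icc_of_hasDerivAt (f := fun t => (α (y, ContinuousLinearMap.id ℝ E) t).1)
      (t₀ := 0) ⟨by linarith, hε⟩
      (continuous_fst.comp_continuousOn (hαc y hy))
      (fun t ht => (hasFDerivAt_fst.comp_hasDerivAt t (hderiv y hy t ht) :))
      (fun t _ => (hψ t y).continuousAt.continuousWithinAt) (fun t _ => hψ t y)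
      (by simp [(hα _ (hmem y hy)).1, hψ0])
  let β : E × ℝ → E × (E →L[ℝ] E) := fun p => α (p.1, ContinuousLinearMap.id ℝ E) p.2
  have hβL : ∀ t ∈ Icc (-ε) ε, LipschitzOnWith L (fun y => β (y, t)) (closedBall x₀ r) := by
    intro t ht
    refine LipschitzOnWith.of_dist_le_mul fun y hy z hz => ?_
    simpa [Prod.dist_eq] using (hL t ht).dist_le_mul _ (hmem y hy) _ (hmem z hz)
  have hβ : ContinuousOn β (closedBall x₀ r ×ˢ Icc (-ε) ε) :=
    continuousOn_prod_of_continuousOn_lipschitzOnWith β L hαc hβL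
  have hβ' : ContinuousOn (fun p : ℝ × E => β (p.2, p.1)) (Ioo (-ε) ε ×ˢ ball x₀ r) :=
    hβ.comp continuous_swap.continuousOn fun p hp =>
      ⟨ball_subset_closedBall hp.2, Ioo_subset_Icc_self hp.1⟩
  obtain ⟨R, hR⟩ := (((isCompact_closedBall x₀ r).prod isCompact_Icc).image_of_continuousOn
    (continuous_fst.comp_continuousOn hβ)).isBounded.subset_closedBall 0
  have hψR : ∀ t ∈ Ioo (-ε) ε, ∀ y ∈ closedBall x₀ r, ψ t y ∈ closedBall 0 R := by
    intro t ht y hy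
    rw [← hαψ y hy t (Ioo_subset_Icc_self ht)]
    exact hR ⟨(y, t), ⟨hy, Ioo_subset_Icc_self ht⟩, rfl⟩
  obtain ⟨K, hK⟩ := hDX.exists_lipschitzOnWith_closedBall R
  obtain ⟨C, hC⟩ := ((isCompact_closedBall (0 : E) R).image hDX.continuous).isBounded.exists_norm_le
  have hψL : ∀ t ∈ Ioo (-ε) ε, LipschitzOnWith L (ψ t) (closedBall x₀ r) := by
    intro t ht
    refine LipschitzOnWith.of_dist_le_mul fun y hy z hz => ?_
    rw [← hαψ y hy t (Ioo_subset_Icc_self ht), ← hαψ z hz t (Ioo_subset_Icc_self ht)]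
    exact (le_max_left _ _).trans ((hβL t (Ioo_subset_Icc_self ht)).dist_le_mul y hy z hz)
  have hM : ∀ y ∈ closedBall x₀ r, ∀ t ∈ Ioo (-ε) ε, HasDerivAt (fun t => (β (y, t)).2)
      ((fderiv ℝ X (ψ t y)).comp (β (y, t)).2) t := by
    intro y hy t ht
    rw [← hαψ y hy t (Ioo_subset_Icc_self ht)]
    exact hasFDerivAt_snd.comp_hasDerivAt t (hderiv y hy t ht)
  have hM0 : ∀ y ∈ closedBall x₀ r, (β (y, 0)).2 = ContinuousLinearMap.id ℝ E := by
    intro y hy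
    simp [β, (hα _ (hmem y hy)).1]
  have hx₀ : x₀ ∈ closedBall x₀ (r : ℝ) := mem_closedBall_self r.2
  refine ⟨ε, hε, r, hr, fun t y => (β (y, t)).2, fun t ht y hy => ?_, ?_,
    continuous_snd.comp_continuousOn hβ', (continuous_fst.comp_continuousOn hβ').congr ?_⟩
  · exact hasFDerivAt_of_variational_equation (M := fun t => (β (y, t)).2) (C := C.toNNReal)
      (hX1.differentiable one_ne_zero) (convex_closedBall 0 R) hK
      (fun z hz => (hC _ (mem_image_of_mem _ hz)).trans (le_coe_toNNReal C))
      (mem_of_superset (isOpen_ball.mem_nhds hy) ball_subset_closedBall) hψR hψ0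
      (fun t _ z _ => hψ t z) hψL (hM0 y (ball_subset_closedBall hy))
      (hM y (ball_subset_closedBall hy)) ht
  · simpa [hψ0, hM0 x₀ hx₀] using hM x₀ hx₀ 0 ⟨by linarith, hε⟩
  · exact fun p hp =>
      (hαψ p.2 (ball_subset_closedBall hp.2) p.1 (Ioo_subset_Icc_self hp.1)).symm

/-- The flow of a `C²` vector field is jointly `C¹`. -/
theorem contDiff_one_flow [FiniteDimensional ℝ E] {X : E → E} (hX : ContDiff ℝ 2 X)
    {ψ : ℝ → E → E} (hψ0 : ∀ x, ψ 0 x = x) (hψadd : ∀ s t x, ψ (s + t) x = ψ s (ψ t x))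
    (hψ : ∀ t x, HasDerivAt (fun τ => ψ τ x) (X (ψ t x)) t) : ContDiff ℝ 1 ↿ψ := by
  have hloc : ∀ x₀, ∃ ε > 0, ∃ r > 0, ∀ t ∈ Ioo (-ε) ε, ∀ y ∈ ball x₀ r,
      ContDiffAt ℝ 1 ↿ψ (t, y) := by
    intro x₀
    obtain ⟨ε, hε, r, hr, M, hM, -, hMc, hψc⟩ := exists_local_fderiv_flow hX hψ0 hψ x₀
    refine ⟨ε, hε, r, hr, fun t ht y hy => ?_⟩
    have hopen : IsOpen (Ioo (-ε) ε ×ˢ ball x₀ r) := isOpen_Ioo.prod isOpen_ball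
    let D₁ : ℝ → E → ℝ →L[ℝ] E := fun t y => ContinuousLinearMap.toSpanSingleton ℝ (X (ψ t y))
    have hD₁ : ContinuousOn ↿D₁ (Ioo (-ε) ε ×ˢ ball x₀ r) :=
      (ContinuousLinearMap.toSpanSingletonCLE (𝕜 := ℝ) (E := E)).continuous.comp_continuousOn
        (hX.continuous.comp_continuousOn hψc)
    refine contDiffAt_one_iff.2 ⟨fun p => (↿D₁ p).coprod (↿M p), Ioo (-ε) ε ×ˢ ball x₀ r,
      hopen.mem_nhds ⟨ht, hy⟩, ?_, fun p hp => ?_⟩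
    · refine ((hD₁.clm_comp (continuousOn_const (c := .fst ℝ ℝ E))).add
        (hMc.clm_comp (continuousOn_const (c := .snd ℝ ℝ E)))).congr fun p _ => ?_
      ext <;> simp
    · refine (hasStrictFDerivAt_uncurry_coprod (u := p) (f := ψ) (f₁ := D₁) (f₂ := M)
        (Eventually.of_forall fun q => (hψ q.1 q.2).hasFDerivAt) ?_
        (hD₁.continuousAt (hopen.mem_nhds hp)) (hMc.continuousAt (hopen.mem_nhds hp))).hasFDerivAt
      filter_upwards [hopen.mem_nhds hp] with q hq using hM q.1 hq.1 q.2 hq.2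
  rw [contDiff_iff_contDiffAt]
  rintro ⟨t, x⟩
  let S : Set ℝ := {t | ContDiffAt ℝ 1 ↿ψ (t, x)}
  have hSo : IsOpen S := isOpen_iff_mem_nhds.2 fun t ht =>
    (Continuous.prodMk_left x).continuousAt.eventually (ContDiffAt.eventually ht (by simp))
  have hSc : IsClosed S := by
    refine isClosed_of_closure_subset fun t ht => ?_
    obtain ⟨ε, hε, r, hr, h⟩ := hloc (ψ t x)
    have hev : ∀ᶠ s in 𝓝 t, t - s ∈ Ioo (-ε) ε ∧ ψ s x ∈ ball (ψ t x) r := by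
      refine Filter.Eventually.and ?_ ((hψ t x).continuousAt.eventually (ball_mem_nhds _ hr))
      filter_upwards [Ioo_mem_nhds (sub_lt_self t hε) (lt_add_of_pos_right t hε)] with s hs
      constructor <;> linarith [hs.1, hs.2]
    obtain ⟨s, hsS, hs1, hs2⟩ := ((mem_closure_iff_frequently.1 ht).and_eventually hev).exists
    have h1 : ContDiffAt ℝ 1 (fun p : ℝ × E => ψ s p.2) (t, x) :=
      ContDiffAt.comp (t, x) (g := ↿ψ) (f := fun p : ℝ × E => (s, p.2)) hsS
        (contDiffAt_const.prodMk contDiffAt_snd)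
    have h2 : ContDiffAt ℝ 1 (fun p : ℝ × E => ψ (p.1 - s) (ψ s p.2)) (t, x) :=
      ContDiffAt.comp (t, x) (g := ↿ψ) (f := fun p : ℝ × E => (p.1 - s, ψ s p.2))
        (h _ hs1 _ hs2) ((contDiffAt_fst.sub contDiffAt_const).prodMk h1)
    refine h2.congr_of_eventuallyEq (Eventually.of_forall fun p => ?_)
    change ψ p.1 p.2 = ψ (p.1 - s) (ψ s p.2)
    rw [← hψadd, sub_add_cancel]
  have h0 : (0 : ℝ) ∈ S := by
    obtain ⟨ε, hε, r, hr, h⟩ := hloc x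
    exact h 0 ⟨by linarith, hε⟩ x (mem_ball_self hr)
  exact (IsClopen.eq_univ ⟨hSc, hSo⟩ ⟨0, h0⟩ ▸ mem_univ t : t ∈ S)

/-- The space derivative of the flow of a `C²` vector field solves the variational equation. -/
theorem hasDerivAt_fderiv_flow [FiniteDimensional ℝ E] {X : E → E} (hX : ContDiff ℝ 2 X)
    {ψ : ℝ → E → E} (hψ0 : ∀ x, ψ 0 x = x) (hψadd : ∀ s t x, ψ (s + t) x = ψ s (ψ t x))
    (hψ : ∀ t x, HasDerivAt (fun τ => ψ τ x) (X (ψ t x)) t) (t : ℝ) (x : E) :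
    HasDerivAt (fun τ => fderiv ℝ (ψ τ) x)
      ((fderiv ℝ X (ψ t x)).comp (fderiv ℝ (ψ t) x)) t := by
  have hdiff : ∀ t, Differentiable ℝ (ψ t) := fun t =>
    ((contDiff_one_flow hX hψ0 hψadd hψ).comp (contDiff_prodMk_right t)).differentiable one_ne_zero
  obtain ⟨ε, hε, r, hr, M, hM, hM', -, -⟩ := exists_local_fderiv_flow hX hψ0 hψ (ψ t x)
  have h0 : HasDerivAt (fun s => fderiv ℝ (ψ s) (ψ t x)) (fderiv ℝ X (ψ t x)) (t - t) := by
    rw [sub_self]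
    refine hM'.congr_of_eventuallyEq ?_
    filter_upwards [Ioo_mem_nhds (neg_lt_zero.2 hε) hε] with s hs
    exact (hM s hs _ (mem_ball_self hr)).fderiv
  have h1 := (h0.comp_sub_const t t).clm_comp (hasDerivAt_const t (fderiv ℝ (ψ t) x))
  simp only [ContinuousLinearMap.comp_zero, add_zero] at h1
  refine h1.congr_of_eventuallyEq (Eventually.of_forall fun τ => ?_)
  have : ψ τ = ψ (τ - t) ∘ ψ t := by
    funext y
    rw [Function.comp_apply, ← hψadd, sub_add_cancel]
  simp only
  rw [this, fderiv_comp x (hdiff _ _) (hdiff _ _)]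

/-- The space derivative of a jointly `C¹` family of maps is jointly continuous. -/
theorem continuous_fderiv_of_contDiff_uncurry {F : Type*} [NormedAddCommGroup F] [NormedSpace ℝ F]
    {ψ : ℝ → E → F} (hψ : ContDiff ℝ 1 ↿ψ) : Continuous fun p : ℝ × E => fderiv ℝ (ψ p.1) p.2 := by
  have hfun : ContDiff ℝ 1 (Function.uncurry fun (p : ℝ × E) (y : E) => ψ p.1 y) :=
    hψ.comp (f := fun q : (ℝ × E) × E => (q.1.1, q.2))
      ((contDiff_fst.comp contDiff_fst).prodMk contDiff_snd)
  exact (hfun.fderiv (n := 0) contDiff_snd (by simp)).continuous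

/-- A bilinear form preserved infinitesimally by a vector field is preserved by its flow. -/
theorem fderiv_flow_preserves_bilinear [FiniteDimensional ℝ E] {X : E → E} (hX : ContDiff ℝ 2 X)
    {ψ : ℝ → E → E} (hψ0 : ∀ x, ψ 0 x = x) (hψadd : ∀ s t x, ψ (s + t) x = ψ s (ψ t x))
    (hψ : ∀ t x, HasDerivAt (fun τ => ψ τ x) (X (ψ t x)) t) (B : E →L[ℝ] E →L[ℝ] ℝ)
    (hB : ∀ z a b, B (fderiv ℝ X z a) b + B a (fderiv ℝ X z b) = 0) (t : ℝ) (x u v : E) :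
    B (fderiv ℝ (ψ t) x u) (fderiv ℝ (ψ t) x v) = B u v := by
  have hd : ∀ w t, HasDerivAt (fun τ => fderiv ℝ (ψ τ) x w)
      (fderiv ℝ X (ψ t x) (fderiv ℝ (ψ t) x w)) t := fun w t => by
    simpa using (hasDerivAt_fderiv_flow hX hψ0 hψadd hψ t x).clm_apply (hasDerivAt_const t w)
  have hc : ∀ τ, HasDerivAt (fun τ => B (fderiv ℝ (ψ τ) x u) (fderiv ℝ (ψ τ) x v)) 0 τ :=
    fun τ => by
      rw [← hB (ψ τ x) (fderiv ℝ (ψ τ) x u) (fderiv ℝ (ψ τ) x v)]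
      exact (B.hasFDerivAt.comp_hasDerivAt τ (hd u τ)).clm_apply (hd v τ)
  have h := is_const_of_deriv_eq_zero (fun τ => (hc τ).differentiableAt)
    (fun τ => (hc τ).deriv) t 0
  have h0 : ψ 0 = id := funext hψ0
  simpa [h0] using h

/-- Differentiation under the integral sign for a jointly `C¹` integrand. -/
theorem hasFDerivAt_intervalIntegral_of_contDiff [FiniteDimensional ℝ E] {f : ℝ → E → ℝ}
    (hf : ContDiff ℝ 1 ↿f) (a b : ℝ) (x : E) :
    HasFDerivAt (fun y => ∫ t in a..b, f t y) (∫ t in a..b, fderiv ℝ (f t) x) x := by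
  have : ProperSpace E := FiniteDimensional.proper ℝ E
  have hf' := continuous_fderiv_of_contDiff_uncurry hf
  have hc : ∀ y, Continuous fun t => f t y := fun y =>
    hf.continuous.comp (Continuous.prodMk_left y)
  obtain ⟨C, hC⟩ :=
    ((isCompact_uIcc.prod (isCompact_closedBall x 1)).image hf').isBounded.exists_norm_le
  refine intervalIntegral.hasFDerivAt_integral_of_dominated_of_fderiv_le
    (bound := fun _ => C) (F := fun y t => f t y) (F' := fun y t => fderiv ℝ (f t) y)
    (closedBall_mem_nhds x one_pos)
    (Eventually.of_forall fun y => (hc y).aestronglyMeasurable) ((hc x).intervalIntegrable a b)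
    (hf'.comp (Continuous.prodMk_left x)).aestronglyMeasurable
    (Eventually.of_forall fun t ht y hy => hC _ ⟨(t, y), ⟨uIoc_subset_uIcc ht, hy⟩, rfl⟩)
    intervalIntegrable_const (Eventually.of_forall fun t _ y _ => ?_)
  exact ((hf.comp (contDiff_prodMk_right t)).differentiable one_ne_zero y).hasFDerivAt

end SmoothFlow

section Symplectic

open Filter

theorem two_le_coe_top : (2 : WithTop ℕ∞) ≤ ((⊤ : ℕ∞) : WithTop ℕ∞) := by
  exact WithTop.coe_le_coe.2 (le_top : (2 : ℕ∞) ≤ ⊤)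

variable {n : ℕ}

/-- The canonical symplectic form `∑ dqᵢ ∧ dpᵢ` on `ℝⁿ × ℝⁿ`. -/
noncomputable def canonicalForm (n : ℕ) :
    ((Fin n → ℝ) × (Fin n → ℝ)) →L[ℝ] ((Fin n → ℝ) × (Fin n → ℝ)) →L[ℝ] ℝ :=
  let q (i : Fin n) : ((Fin n → ℝ) × (Fin n → ℝ)) →L[ℝ] ℝ :=
    (ContinuousLinearMap.proj i).comp (.fst ℝ (Fin n → ℝ) (Fin n → ℝ))
  let p (i : Fin n) : ((Fin n → ℝ) × (Fin n → ℝ)) →L[ℝ] ℝ :=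
    (ContinuousLinearMap.proj i).comp (.snd ℝ (Fin n → ℝ) (Fin n → ℝ))
  ∑ i, ((q i).smulRight (p i) - (p i).smulRight (q i))

theorem canonicalForm_apply (a b : (Fin n → ℝ) × (Fin n → ℝ)) :
    canonicalForm n a b = ∑ i, (a.1 i * b.2 i - a.2 i * b.1 i) := by
  simp [canonicalForm, sum_apply, Finset.sum_sub_distrib]

theorem canonicalForm_swap (a b : (Fin n → ℝ) × (Fin n → ℝ)) :
    canonicalForm n a b = -canonicalForm n b a := by
  simp only [canonicalForm_apply, ← Finset.sum_neg_distrib]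
  exact Finset.sum_congr rfl fun i _ => by ring

theorem canonicalForm_self (a : (Fin n → ℝ) × (Fin n → ℝ)) : canonicalForm n a a = 0 := by
  linarith [canonicalForm_swap a a]

theorem eq_of_canonicalForm_eq {a b : (Fin n → ℝ) × (Fin n → ℝ)}
    (h : ∀ c, canonicalForm n a c = canonicalForm n b c) : a = b := by
  refine Prod.ext (funext fun i => ?_) (funext fun i => ?_)
  · simpa [canonicalForm_apply, Pi.single_apply] using h (0, Pi.single i 1)
  · simpa [canonicalForm_apply, Pi.single_apply] using h (Pi.single i 1, 0)

theorem canonicalForm_hamVF (g : ((Fin n → ℝ) × (Fin n → ℝ)) → ℝ)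
    (x b : (Fin n → ℝ) × (Fin n → ℝ)) : canonicalForm n (hamVF g x) b = fderiv ℝ g x b := by
  have hb : b = ∑ i, (b.2 i • ((0 : Fin n → ℝ), Pi.single (M := fun _ => ℝ) i (1 : ℝ)) +
      b.1 i • (Pi.single (M := fun _ => ℝ) i (1 : ℝ), (0 : Fin n → ℝ))) := by
    refine Prod.ext (funext fun j => ?_) (funext fun j => ?_) <;>
      simp [Prod.fst_sum, Prod.snd_sum, Finset.sum_apply, Pi.single_apply]
  conv_rhs => rw [hb]
  simp only [canonicalForm_apply, hamVF, map_sum, map_add, map_smul, smul_eq_mul]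
  exact Finset.sum_congr rfl fun i _ => by ring

theorem contDiff_hamVF {H : ((Fin n → ℝ) × (Fin n → ℝ)) → ℝ} (hH : ContDiff ℝ (⊤ : ℕ∞) H) :
    ContDiff ℝ (⊤ : ℕ∞) (hamVF H) := by
  have h : ContDiff ℝ (⊤ : ℕ∞) (fderiv ℝ H) := hH.fderiv_right (by simp)
  exact (contDiff_pi.2 fun i => h.clm_apply contDiff_const).prodMk
    (contDiff_pi.2 fun i => (h.clm_apply contDiff_const).neg)

/-- The vector field `c • X_H` is infinitesimally symplectic as soon as `dc ∧ dH = 0`. -/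
theorem canonicalForm_fderiv_smul_hamVF {H c : ((Fin n → ℝ) × (Fin n → ℝ)) → ℝ}
    (hH : ContDiff ℝ (⊤ : ℕ∞) H) (hc : ContDiff ℝ (⊤ : ℕ∞) c)
    (hwedge : ∀ z a b, fderiv ℝ c z a * fderiv ℝ H z b = fderiv ℝ c z b * fderiv ℝ H z a)
    (z a b : (Fin n → ℝ) × (Fin n → ℝ)) :
    canonicalForm n (fderiv ℝ (fun y => c y • hamVF H y) z a) b +
      canonicalForm n a (fderiv ℝ (fun y => c y • hamVF H y) z b) = 0 := by
  have hX : DifferentiableAt ℝ (fun y => c y • hamVF H y) z :=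
    (hc.smul (contDiff_hamVF hH)).differentiable (by simp) z
  have hH' : DifferentiableAt ℝ (fderiv ℝ H) z :=
    (hH.fderiv_right (m := (⊤ : ℕ∞)) (by simp)).differentiable (by simp) z
  have key : ∀ a b, canonicalForm n (fderiv ℝ (fun y => c y • hamVF H y) z a) b =
      c z * fderiv ℝ (fderiv ℝ H) z a b + fderiv ℝ c z a * fderiv ℝ H z b := by
    intro a b
    have h1 : HasFDerivAt (fun y => canonicalForm n (c y • hamVF H y) b)
        (((canonicalForm n).flip b).comp (fderiv ℝ (fun y => c y • hamVF H y) z)) z :=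
      ((canonicalForm n).flip b).hasFDerivAt.comp z hX.hasFDerivAt
    have h2 : HasFDerivAt (fun y => c y * fderiv ℝ H y b) _ z :=
      (hc.differentiable (by simp) z).hasFDerivAt.mul
        (hH'.hasFDerivAt.clm_apply (hasFDerivAt_const b z))
    have h3 : (fun y => canonicalForm n (c y • hamVF H y) b) = fun y => c y * fderiv ℝ H y b := by
      funext y
      simp [canonicalForm_hamVF]
    rw [h3] at h1
    have := congrArg (fun T : _ →L[ℝ] ℝ => T a) (h1.unique h2)
    simp at this
    linarith
  have hsymm : fderiv ℝ (fderiv ℝ H) z a b = fderiv ℝ (fderiv ℝ H) z b a :=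
    (hH.contDiffAt.isSymmSndFDerivAt (by simpa using two_le_coe_top)) a b
  rw [canonicalForm_swap a, key, key, hsymm, hwedge z a b]
  ring

/-- The period-energy relation `dT ∧ dH = 0` for a Hamiltonian flow all of whose orbits are
periodic with a smooth period function `T`. -/
theorem period_energy_relation {n : ℕ} {H T : ((Fin n → ℝ) × (Fin n → ℝ)) → ℝ}
    (hH : ContDiff ℝ (⊤ : ℕ∞) H) (hT : Differentiable ℝ T)
    {φ : ℝ → ((Fin n → ℝ) × (Fin n → ℝ)) → ((Fin n → ℝ) × (Fin n → ℝ))}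
    (hφ0 : ∀ x, φ 0 x = x) (hφadd : ∀ s t x, φ (s + t) x = φ s (φ t x))
    (hφ : ∀ t x, HasDerivAt (fun τ => φ τ x) (hamVF H (φ t x)) t)
    (hper : ∀ x, φ (T x) x = x) (x v w : (Fin n → ℝ) × (Fin n → ℝ)) :
    fderiv ℝ T x v * fderiv ℝ H x w = fderiv ℝ T x w * fderiv ℝ H x v := by
  have hX : ContDiff ℝ 2 (hamVF H) := (contDiff_hamVF hH).of_le two_le_coe_top
  have hC1 := contDiff_one_flow hX hφ0 hφadd hφ
  have hsymp := fderiv_flow_preserves_bilinear hX hφ0 hφadd hφ (canonicalForm n)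
    (fun z a b => by
      simpa using canonicalForm_fderiv_smul_hamVF hH (contDiff_const (c := (1 : ℝ)))
        (by simp) z a b) (T x) x v w
  have hpart : ∀ v, fderiv ℝ (φ (T x)) x v = v - fderiv ℝ T x v • hamVF H x := by
    intro v
    have hD : HasFDerivAt ↿φ (fderiv ℝ ↿φ (T x, x)) (T x, x) :=
      (hC1.differentiable one_ne_zero _).hasFDerivAt
    have h1 : HasFDerivAt (fun y => y) _ x :=
      (HasFDerivAt.comp (f := fun y => (T y, y)) x hD
        ((hT x).hasFDerivAt.prodMk (hasFDerivAt_id x))).congr_of_eventuallyEq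
        (Eventually.of_forall fun y => (hper y).symm)
    have h2 : fderiv ℝ ↿φ (T x, x) (fderiv ℝ T x v, v) = v := by
      simpa using congrArg (fun A : _ →L[ℝ] _ => A v) (h1.unique (hasFDerivAt_id x))
    have h3 : fderiv ℝ (φ (T x)) x v = fderiv ℝ ↿φ (T x, x) (0, v) := by
      have : HasFDerivAt (φ (T x)) _ x := hD.comp x (hasFDerivAt_prodMk_right (T x) x)
      simp [this.fderiv]
    have h4 : fderiv ℝ ↿φ (T x, x) (1, 0) = hamVF H x := by
      have h5 : HasFDerivAt (fun τ => φ τ x) _ (T x) :=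
        HasFDerivAt.comp (f := fun τ : ℝ => (τ, x)) (T x) hD (hasFDerivAt_prodMk_left (T x) x)
      have h6 := h5.hasDerivAt.unique (hφ (T x) x)
      simpa [hper] using h6
    have h7 : (fderiv ℝ T x v, v) = fderiv ℝ T x v • ((1 : ℝ), (0 : (Fin n → ℝ) × (Fin n → ℝ)))
        + (0, v) := by simp
    rw [h7, map_add, map_smul, h4, ← h3] at h2
    exact eq_sub_of_add_eq' h2
  rw [hpart, hpart] at hsymp
  have hv := canonicalForm_swap v (hamVF H x)
  simp only [map_sub, map_smul, sub_apply, smul_apply,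
    smul_eq_mul, canonicalForm_self, hv, canonicalForm_hamVF] at hsymp
  linarith

/-- A symplectic diffeomorphism pulls back `X_g` to the Hamiltonian vector field of the pullback
of `g`. -/
theorem pullback_hamVF {n : ℕ} {g : ((Fin n → ℝ) × (Fin n → ℝ)) → ℝ}
    {f k : ((Fin n → ℝ) × (Fin n → ℝ)) → ((Fin n → ℝ) × (Fin n → ℝ))}
    {x : (Fin n → ℝ) × (Fin n → ℝ)} (hg : DifferentiableAt ℝ g (f x))
    (hf : DifferentiableAt ℝ f x) (hk : DifferentiableAt ℝ k (f x)) (hkx : k (f x) = x)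
    (hfk : ∀ y, f (k y) = y)
    (hsymp : ∀ u v, canonicalForm n (fderiv ℝ f x u) (fderiv ℝ f x v) = canonicalForm n u v) :
    fderiv ℝ k (f x) (hamVF g (f x)) = hamVF (fun y => g (f y)) x := by
  refine eq_of_canonicalForm_eq fun b => ?_
  have hinv : fderiv ℝ f x (fderiv ℝ k (f x) (hamVF g (f x))) = hamVF g (f x) := by
    have h1 : HasFDerivAt (fun y => y) _ (f x) :=
      (HasFDerivAt.comp (f x) (hkx.symm ▸ hf.hasFDerivAt) hk.hasFDerivAt).congr_of_eventuallyEq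
        (Eventually.of_forall fun y => (hfk y).symm)
    simpa [hkx] using congrArg (fun A : _ →L[ℝ] _ => A (hamVF g (f x))) (h1.unique (hasFDerivAt_id _))
  have h2 : HasFDerivAt (fun y => g (f y)) _ x := hg.hasFDerivAt.comp x hf.hasFDerivAt
  rw [← hsymp, hinv, canonicalForm_hamVF, canonicalForm_hamVF, h2.fderiv]
  rfl

end Symplectic

/-- The average of a Hamiltonian vector field is the Hamiltonian vector field of the
averaged Hamiltonian, `⟨X_g⟩ = X_{⟨g⟩}`; in particular Hamiltonian vector fields of
S¹-invariant functions are S¹-invariant. -/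
theorem average_of_hamiltonian_vector_field
    {n : ℕ} (H : ((Fin n → ℝ) × (Fin n → ℝ)) → ℝ) (hH : ContDiff ℝ (⊤ : ℕ∞) H)
    (ω : ((Fin n → ℝ) × (Fin n → ℝ)) → ℝ) (hω : ContDiff ℝ (⊤ : ℕ∞) ω)
    (hωpos : ∀ x, 0 < ω x)
    (φ ψ : ℝ → ((Fin n → ℝ) × (Fin n → ℝ)) → ((Fin n → ℝ) × (Fin n → ℝ)))
    (hφ0 : ∀ x, φ 0 x = x) (hφadd : ∀ s t : ℝ, ∀ x, φ (s + t) x = φ s (φ t x))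
    (hφflow : ∀ t : ℝ, ∀ x, HasDerivAt (fun τ : ℝ => φ τ x) (hamVF H (φ t x)) t)
    (hφper : ∀ t : ℝ, ∀ x, φ (t + 2 * π / ω x) x = φ t x)
    (hψ0 : ∀ x, ψ 0 x = x) (hψadd : ∀ s t : ℝ, ∀ x, ψ (s + t) x = ψ s (ψ t x))
    (hψflow : ∀ t : ℝ, ∀ x, HasDerivAt (fun τ : ℝ => ψ τ x)
      ((ω (ψ t x))⁻¹ • hamVF H (ψ t x)) t)
    (hψper : ∀ t : ℝ, ∀ x, ψ (t + 2 * π) x = ψ t x)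
    (g : ((Fin n → ℝ) × (Fin n → ℝ)) → ℝ) (hg : ContDiff ℝ (⊤ : ℕ∞) g) :
    (∀ x, (1 / (2 * π)) •
        (∫ t in (0:ℝ)..(2 * π), fderiv ℝ (ψ (-t)) (ψ t x) (hamVF g (ψ t x)))
      = hamVF (fun y => (1 / (2 * π)) * ∫ t in (0:ℝ)..(2 * π), g (ψ t y)) x) ∧
    ((∀ t : ℝ, ∀ x, g (ψ t x) = g x) →
      ∀ t : ℝ, ∀ x, fderiv ℝ (ψ (-t)) (ψ t x) (hamVF g (ψ t x)) = hamVF g x) := by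
  have hc : ContDiff ℝ (⊤ : ℕ∞) fun y => (ω y)⁻¹ := hω.inv fun y => (hωpos y).ne'
  have hωinv : Differentiable ℝ fun y => (ω y)⁻¹ := hc.differentiable (by simp)
  have hwedge : ∀ z a b, fderiv ℝ (fun y => (ω y)⁻¹) z a * fderiv ℝ H z b =
      fderiv ℝ (fun y => (ω y)⁻¹) z b * fderiv ℝ H z a := by
    intro z a b
    have h := period_energy_relation (T := fun y => 2 * π * (ω y)⁻¹) hH (hωinv.const_mul _)
      hφ0 hφadd hφflow
      (fun y => by simpa [hφ0, div_eq_mul_inv] using hφper 0 y) z a b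
    rw [fderiv_const_mul (hωinv z)] at h
    simp only [smul_apply, smul_eq_mul, mul_assoc] at h
    exact mul_left_cancel₀ Real.pi_ne_zero (mul_left_cancel₀ two_ne_zero h)
  have hX : ContDiff ℝ 2 fun y => (ω y)⁻¹ • hamVF H y :=
    (hc.smul (contDiff_hamVF hH)).of_le two_le_coe_top
  have hψC1 : ContDiff ℝ 1 ↿ψ := contDiff_one_flow hX hψ0 hψadd hψflow
  have hψd : ∀ t, Differentiable ℝ (ψ t) := fun t =>
    (hψC1.comp (contDiff_prodMk_right t)).differentiable one_ne_zero
  have hgd : Differentiable ℝ g := hg.differentiable (by simp)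
  have hpull : ∀ t x, fderiv ℝ (ψ (-t)) (ψ t x) (hamVF g (ψ t x)) =
      hamVF (fun y => g (ψ t y)) x := fun t x =>
    pullback_hamVF (hgd _) (hψd t x) (hψd (-t) _) (by rw [← hψadd, neg_add_cancel, hψ0])
      (fun y => by rw [← hψadd, add_neg_cancel, hψ0])
      (fderiv_flow_preserves_bilinear hX hψ0 hψadd hψflow (canonicalForm n)
        (canonicalForm_fderiv_smul_hamVF hH hc hwedge) t x)
  refine ⟨fun x => eq_of_canonicalForm_eq fun b => ?_, fun hinv t x => ?_⟩
  · have hgψ : ContDiff ℝ 1 ↿(fun t y => g (ψ t y)) :=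
      (hg.of_le (by exact_mod_cast le_top)).comp hψC1
    have hcont : Continuous fun t => fderiv ℝ (fun y => g (ψ t y)) x :=
      (continuous_fderiv_of_contDiff_uncurry hgψ).comp (Continuous.prodMk_left x)
    have hcontX : Continuous fun t => hamVF (fun y => g (ψ t y)) x :=
      (continuous_pi fun i => hcont.clm_apply continuous_const).prodMk
        (continuous_pi fun i => (hcont.clm_apply continuous_const).neg)
    have hint := (hasFDerivAt_intervalIntegral_of_contDiff hgψ 0 (2 * π) x).const_mul (1 / (2 * π))
    have h1 := ((canonicalForm n).flip b).intervalIntegral_comp_comm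
      (hcontX.intervalIntegrable (μ := MeasureTheory.volume) 0 (2 * π))
    simp only [ContinuousLinearMap.flip_apply, canonicalForm_hamVF] at h1
    simp only [hpull]
    rw [canonicalForm_hamVF, hint.fderiv, map_smul, smul_apply,
      smul_apply, ← h1,
      ContinuousLinearMap.intervalIntegral_apply (hcont.intervalIntegrable 0 (2 * π))]
  · simp only [hpull, hinv]
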